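/- Let E(q) = (q;q)_∞. Then U_{5,2}( E(q)² ) = − J_5², i.e. if E(q)² = Σ_{n≥0} a(n) q^n then Σ_{n≥0} a(5n+2) q^n = − (q⁵;q⁵)_∞². -/

import Mathlib

/-!
Writing `p k = k (3k - 1) / 2` for the pentagonal numbers, the pentagonal number theorem gives
`E(q)² = ∑_{(k,l) ∈ ℤ²} (-1)^(k+l) q^(p k + p l)`, so by uniqueness of power series coefficients
`a n` is the signed number of pairs `(k, l)` with `p k + p l = n` (`coeff_eq_pairSum`).

With `x = 6k - 1`, `y = 6l - 1` we have `24 n + 2 = x² + y²`. Hence `n ≡ 2 (mod 5)` exactly when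
`5 ∣ x² + y²`, that is when the Gaussian integer `x + iy` is divisible by `2 + i` or by `2 - i`.
On the multiples of `2 + i`, the reflection `(2 + i) u ↦ -(2 + i) ū` preserves the norm and the
residue class `-1 (mod 6)` of both coordinates, and it reverses the sign `(-1)^(k+l)`; so these
pairs contribute `0` (`sum_pairsLeft`), and so, by exchanging `x` and `y`, do the multiples of
`2 - i`. By inclusion-exclusion only minus the contribution of the multiples of `5` is left. For
exponent `5n + 2` these are the points `-5 (x' + iy')` with `x' = 6k' - 1`, `y' = 6l' - 1` and
`x'² + y'² = 24 (n / 5) + 2`, and they carry the sign `(-1)^(k'+l')`. This gives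
`a (5n + 2) = -a (n / 5)`, read as `0` if `5 ∤ n` (`pairSum_five_mul_add_two`), and summing over
`n` gives `-E(q⁵)²`.
-/

/-- The q-Pochhammer symbol `(a;q)_∞ = ∏_{k≥0} (1 - a q^k)`. -/
noncomputable def qPochInf (a q : ℂ) : ℂ := ∏' k : ℕ, (1 - a * q ^ k)

/-- `Jba b a q` is `J_{b,a} = j(q^a;q^b) = (q^a;q^b)_∞ (q^{b-a};q^b)_∞ (q^b;q^b)_∞`. -/
noncomputable def Jba (b a : ℕ) (q : ℂ) : ℂ :=
  qPochInf (q ^ a) (q ^ b) * qPochInf (q ^ (b - a)) (q ^ b) * qPochInf (q ^ b) (q ^ b)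

/-- `Jb b q` is `J_b = (q^b;q^b)_∞`. -/
noncomputable def Jb (b : ℕ) (q : ℂ) : ℂ := qPochInf (q ^ b) (q ^ b)

open Filter Topology

/-! ### The pentagonal number theorem on the unit disc -/

theorem summable_norm_pow_add {q : ℂ} (hq : ‖q‖ < 1) (k : ℕ) :
    Summable fun n : ℕ ↦ ‖-q ^ (n + k)‖ := by
  simpa using (summable_nat_add_iff k).mpr (summable_geometric_of_lt_one (norm_nonneg q) hq)

theorem summable_norm_pow_pentagonal {q : ℂ} (hq : ‖q‖ < 1) :
    Summable fun k : ℤ ↦ ‖(-1 : ℂ) ^ k * q ^ pentagonal k‖ := by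
  simpa [Function.comp_def] using
    (summable_geometric_of_lt_one (norm_nonneg q) hq).comp_injective pentagonal_injective

/-- The summands of the auxiliary series in the proof of the pentagonal number theorem are
dominated by a geometric series, uniformly in `k`. -/
theorem norm_pow_mul_prod_le {q : ℂ} (hq : ‖q‖ < 1) (k n : ℕ) :
    ‖q ^ ((k + 1) * n) * ∏ i ∈ Finset.range (n + 1), (1 - q ^ (k + i + 1))‖ ≤
      ‖q‖ ^ n * Real.exp (∑' i : ℕ, ‖q‖ ^ i) := by
  have hs := summable_geometric_of_lt_one (norm_nonneg q) hq
  rw [norm_mul, norm_pow, norm_prod]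
  refine mul_le_mul ?_ ?_ (by positivity) (by positivity)
  · exact pow_le_pow_of_le_one (norm_nonneg q) hq.le (by nlinarith)
  · calc ∏ i ∈ Finset.range (n + 1), ‖1 - q ^ (k + i + 1)‖
        ≤ ∏ i ∈ Finset.range (n + 1), (1 + ‖q‖ ^ i) := by
          refine Finset.prod_le_prod (fun _ _ ↦ norm_nonneg _) fun i _ ↦ ?_
          refine (norm_sub_le _ _).trans ?_
          rw [norm_one, norm_pow]
          gcongr 1 + ?_
          exact pow_le_pow_of_le_one (norm_nonneg q) hq.le (by omega)
      _ ≤ Real.exp (∑ i ∈ Finset.range (n + 1), ‖q‖ ^ i) :=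
          Real.prod_one_add_le_exp_sum _ fun _ ↦ by positivity
      _ ≤ _ := Real.exp_le_exp.mpr (hs.sum_le_tsum _ fun _ _ ↦ by positivity)

theorem qPochInf_self_eq_tsum {q : ℂ} (hq : ‖q‖ < 1) :
    qPochInf q q = ∑' k : ℤ, (-1 : ℂ) ^ k * q ^ pentagonal k := by
  have hgeom := summable_geometric_of_lt_one (norm_nonneg q) hq
  set C := Real.exp (∑' i : ℕ, ‖q‖ ^ i)
  have hsumC : Summable fun n : ℕ ↦ ‖q‖ ^ n * C := hgeom.mul_right _
  -- reindexing `k ↦ -k` matches the grouping of the terms used in Mathlib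
  have hint : HasSum (fun k : ℕ ↦ (-1 : ℂ) ^ k * (q ^ pentagonal (-k) - q ^ pentagonal (k + 1)))
      (∑' k : ℤ, (-1 : ℂ) ^ k * q ^ pentagonal k) := by
    have h := (summable_norm_pow_pentagonal hq).of_norm.hasSum
    rw [← (Equiv.neg ℤ).hasSum_iff] at h
    refine h.nat_add_neg_add_one.congr_fun fun k ↦ ?_
    simp only [Function.comp_apply, Equiv.neg_apply, neg_neg]
    rw [zpow_neg, zpow_add₀ (by norm_num), ← inv_zpow]
    norm_num
    ring
  rw [← hint.tsum_eq, ← Pentagonal.tprod_one_sub_pow ?_ ?_ ?_ hint.summable ?_]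
  · simp only [qPochInf, pow_succ']
  · exact tendsto_pow_atTop_nhds_zero_of_norm_lt_one hq
  · exact fun k ↦ hsumC.of_norm_bounded (norm_pow_mul_prod_le hq k)
  · intro k
    simpa [sub_eq_add_neg, add_assoc] using
      multipliable_one_add_of_summable (summable_norm_pow_add hq (k + 1))
  · -- the tails are bounded by a constant, and their factor tends to zero
    refine squeeze_zero_norm (a := fun k ↦ ‖q‖ ^ k * ∑' n : ℕ, ‖q‖ ^ n * C) (fun k ↦ ?_) ?_
    · rw [norm_mul, norm_mul, norm_pow, norm_neg, norm_one, one_pow, one_mul, norm_pow]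
      refine mul_le_mul ?_ (tsum_of_norm_bounded hsumC.hasSum (norm_pow_mul_prod_le hq k))
        (norm_nonneg _) (by positivity)
      refine pow_le_pow_of_le_one (norm_nonneg q) hq.le ?_
      rw [Nat.le_div_iff_mul_le two_pos]
      nlinarith
    · simpa using (tendsto_pow_atTop_nhds_zero_of_lt_one (norm_nonneg q) hq).mul_const
        (∑' n : ℕ, ‖q‖ ^ n * C)

theorem qPochInf_self_ne_zero {q : ℂ} (hq : ‖q‖ < 1) : qPochInf q q ≠ 0 := by
  have h : ∏' n : ℕ, (1 + -q ^ (n + 1)) ≠ 0 := by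
    refine tprod_one_add_ne_zero_of_summable (fun n h ↦ ?_) (summable_norm_pow_add hq 1)
    have h1 : q ^ (n + 1) = 1 := by linear_combination -h
    have h2 : ‖q‖ ^ (n + 1) = 1 := by rw [← norm_pow, h1, norm_one]
    exact (pow_lt_one₀ (norm_nonneg q) hq n.succ_ne_zero).ne h2
  simpa only [qPochInf, ← pow_succ', ← sub_eq_add_neg] using h

/-! ### The coefficients of the square -/

/-- The pairs `(k, l)` of integers with `p k + p l = n`, where `p` denotes the pentagonal numbers.
The box only serves to make this a `Finset`; see `mem_pairs`. -/
noncomputable def pairs (n : ℕ) : Finset (ℤ × ℤ) :=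
  (Finset.Icc (-n : ℤ) n ×ˢ Finset.Icc (-n : ℤ) n).filter
    fun x ↦ pentagonal x.1 + pentagonal x.2 = n

/-- The signed number of representations of `n` as a sum of two pentagonal numbers. -/
noncomputable def pairSum (n : ℕ) : ℂ := ∑ x ∈ pairs n, (-1 : ℂ) ^ (x.1 + x.2)

theorem abs_le_pentagonal (k : ℤ) : |k| ≤ pentagonal k := by
  have h := two_mul_natCast_pentagonal k
  rcases le_or_gt k 0 with hk | hk
  · rw [abs_of_nonpos hk]
    nlinarith
  · rw [abs_of_pos hk]
    nlinarith

theorem mem_pairs {n : ℕ} {x : ℤ × ℤ} :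
    x ∈ pairs n ↔ pentagonal x.1 + pentagonal x.2 = n := by
  simp only [pairs, Finset.mem_filter, Finset.mem_product, Finset.mem_Icc, and_iff_right_iff_imp]
  intro h
  have h1 := abs_le.mp (abs_le_pentagonal x.1)
  have h2 := abs_le.mp (abs_le_pentagonal x.2)
  omega

theorem mem_pairs_iff_int {n : ℕ} {x : ℤ × ℤ} :
    x ∈ pairs n ↔ x.1 * (3 * x.1 - 1) + x.2 * (3 * x.2 - 1) = 2 * n := by
  rw [mem_pairs, ← two_mul_natCast_pentagonal, ← two_mul_natCast_pentagonal]
  omega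

theorem hasSum_pairSum {q : ℂ} (hq : ‖q‖ < 1) :
    HasSum (fun n ↦ pairSum n * q ^ n) (qPochInf q q ^ 2) := by
  have hs := summable_norm_pow_pentagonal hq
  have h := (summable_mul_of_summable_norm hs hs).hasSum
  rw [← tsum_mul_tsum_of_summable_norm hs hs, ← qPochInf_self_eq_tsum hq, ← sq] at h
  refine (h.tsum_fiberwise
    fun x : ℤ × ℤ ↦ pentagonal x.1 + pentagonal x.2).congr_fun fun n ↦ ?_
  have hset : (fun x : ℤ × ℤ ↦ pentagonal x.1 + pentagonal x.2) ⁻¹' {n} = (pairs n : Set (ℤ × ℤ)) := by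
    ext x
    simp [mem_pairs]
  rw [hset, Finset.tsum_subtype' (pairs n)
    (fun x ↦ (-1 : ℂ) ^ x.1 * q ^ pentagonal x.1 * ((-1 : ℂ) ^ x.2 * q ^ pentagonal x.2)),
    pairSum, Finset.sum_mul]
  refine Finset.sum_congr rfl fun x hx ↦ ?_
  rw [← mem_pairs.mp hx, pow_add, zpow_add₀ (by norm_num)]
  ring

theorem coeff_eq_pairSum {a : ℕ → ℂ}
    (ha : ∀ q : ℂ, ‖q‖ < 1 → (qPochInf q q) ^ 2 = ∑' n : ℕ, a n * q ^ n) (n : ℕ) :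
    a n = pairSum n := by
  have key (c : ℕ → ℂ) (hc : ∀ q : ℂ, ‖q‖ < 1 → HasSum (fun n ↦ c n * q ^ n) (qPochInf q q ^ 2)) :
      HasFPowerSeriesAt (fun q ↦ qPochInf q q ^ 2) (FormalMultilinearSeries.ofScalars ℂ c) 0 := by
    rw [hasFPowerSeriesAt_iff]
    filter_upwards [Metric.ball_mem_nhds (0 : ℂ) one_pos] with z hz
    simpa [FormalMultilinearSeries.coeff_ofScalars, mul_comm] using
      hc z (mem_ball_zero_iff.mp hz)
  have h1 := key a fun q hq ↦ by
    rw [ha q hq]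
    refine Summable.hasSum ?_
    -- a divergent series would have the junk value `0`, but `E(q)` does not vanish
    by_contra hns
    have h0 := ha q hq
    rw [tsum_eq_zero_of_not_summable hns] at h0
    exact pow_ne_zero 2 (qPochInf_self_ne_zero hq) h0
  have h2 := key pairSum fun q hq ↦ hasSum_pairSum hq
  have h := congrArg (fun p ↦ p.coeff n) (h1.eq_formalMultilinearSeries h2)
  simpa [FormalMultilinearSeries.coeff_ofScalars] using h

/-! ### The recurrence at the prime five -/

/-- The pairs for which `(6k - 1) + i (6l - 1)` is divisible by `2 + i`. -/
noncomputable def pairsLeft (n : ℕ) : Finset (ℤ × ℤ) := (pairs n).filter fun x ↦ 5 ∣ 2 * x.1 + x.2 + 2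

/-- The pairs for which `(6k - 1) + i (6l - 1)` is divisible by `2 - i`. -/
noncomputable def pairsRight (n : ℕ) : Finset (ℤ × ℤ) := (pairs n).filter fun x ↦ 5 ∣ x.1 + 2 * x.2 + 2

theorem neg_one_zpow_add_eq_zero {s t : ℤ} (h : Odd (t - s)) : (-1 : ℂ) ^ s + (-1) ^ t = 0 := by
  rw [show t = s + (t - s) by ring, zpow_add₀ (by norm_num), h.neg_one_zpow]
  ring

/-- The reflection `(2 + i) u ↦ -(2 + i) ū` of the multiples of `2 + i`, in the coordinates
`k, l`, is a sign-reversing involution. -/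
theorem sum_pairsLeft (n : ℕ) : ∑ x ∈ pairsLeft n, (-1 : ℂ) ^ (x.1 + x.2) = 0 := by
  have hanti : ∀ x ∈ pairsLeft n, (-1 : ℂ) ^ (x.1 + x.2) +
      (-1) ^ ((-3 * x.1 - 4 * x.2 + 2) / 5 + (-4 * x.1 + 3 * x.2 + 1) / 5) = 0 := by
    intro x hx
    obtain ⟨-, h⟩ := Finset.mem_filter.mp hx
    refine neg_one_zpow_add_eq_zero ?_
    rw [Int.odd_iff]
    omega
  refine Finset.sum_involution
    (fun x _ ↦ ((-3 * x.1 - 4 * x.2 + 2) / 5, (-4 * x.1 + 3 * x.2 + 1) / 5)) hanti ?_ ?_ ?_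
  · intro x hx hne heq
    have h := hanti x hx
    rw [Prod.ext_iff] at heq
    dsimp only at heq
    rw [heq.1, heq.2, ← two_mul] at h
    exact hne ((mul_eq_zero.mp h).resolve_left two_ne_zero)
  · intro x hx
    obtain ⟨hx, h⟩ := Finset.mem_filter.mp hx
    rw [mem_pairs_iff_int] at hx
    obtain ⟨c, hc⟩ := h
    -- `l = 5c - 2k - 2` turns both quotients into polynomials
    obtain ⟨k, l⟩ := x
    dsimp only at hx hc
    obtain rfl : l = 5 * c - 2 * k - 2 := by linarith
    have e1 : (-3 * k - 4 * (5 * c - 2 * k - 2) + 2) / 5 = k - 4 * c + 2 := by omega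
    have e2 : (-4 * k + 3 * (5 * c - 2 * k - 2) + 1) / 5 = -2 * k + 3 * c - 1 := by omega
    rw [pairsLeft, Finset.mem_filter, mem_pairs_iff_int]
    dsimp only
    rw [e1, e2]
    exact ⟨by linear_combination hx, -c + 1, by ring⟩
  · intro x hx
    obtain ⟨-, h⟩ := Finset.mem_filter.mp hx
    ext <;> dsimp only <;> omega

theorem sum_pairsRight (n : ℕ) : ∑ x ∈ pairsRight n, (-1 : ℂ) ^ (x.1 + x.2) = 0 := by
  rw [← sum_pairsLeft n]
  refine Finset.sum_nbij' Prod.swap Prod.swap ?_ ?_ (by simp) (by simp)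
    fun x _ ↦ by simp [add_comm]
  all_goals
    intro x hx
    simp only [pairsLeft, pairsRight, Finset.mem_filter, mem_pairs, Prod.fst_swap,
      Prod.snd_swap] at hx ⊢
    exact ⟨by omega, by omega⟩

theorem pairsLeft_union_pairsRight (n : ℕ) :
    pairsLeft (5 * n + 2) ∪ pairsRight (5 * n + 2) = pairs (5 * n + 2) := by
  rw [pairsLeft, pairsRight, ← Finset.filter_or, Finset.filter_eq_self]
  intro x hx
  rw [mem_pairs_iff_int] at hx
  have h5 : Prime (5 : ℤ) := Nat.prime_iff_prime_int.mp Nat.prime_five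
  rw [← h5.dvd_mul]
  push_cast at hx
  refine ⟨x.1 ^ 2 + x.1 * x.2 + x.2 ^ 2 + x.1 + x.2 - 2 * n, ?_⟩
  linear_combination (-1) * hx

theorem mem_pairsLeft_inter_pairsRight {n : ℕ} {x : ℤ × ℤ} :
    x ∈ pairsLeft n ∩ pairsRight n ↔
      (x.1 * (3 * x.1 - 1) + x.2 * (3 * x.2 - 1) = 2 * n) ∧ 5 ∣ 1 - x.1 ∧ 5 ∣ 1 - x.2 := by
  rw [pairsLeft, pairsRight, Finset.mem_inter, Finset.mem_filter, Finset.mem_filter,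
    mem_pairs_iff_int]
  omega

/-- The points `-5 (x' + iy')` contribute `pairSum (n / 5)`: on pairs this is the substitution
`k = 1 - 5k'`, `l = 1 - 5l'`. -/
theorem sum_pairsLeft_inter_pairsRight (n : ℕ) :
    ∑ x ∈ pairsLeft (5 * n + 2) ∩ pairsRight (5 * n + 2), (-1 : ℂ) ^ (x.1 + x.2) =
      if 5 ∣ n then pairSum (n / 5) else 0 := by
  split_ifs with hn
  · obtain ⟨m, rfl⟩ := hn
    rw [Nat.mul_div_cancel_left m (by norm_num), pairSum]
    refine Finset.sum_nbij' (fun x ↦ ((1 - x.1) / 5, (1 - x.2) / 5))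
      (fun x ↦ (1 - 5 * x.1, 1 - 5 * x.2)) ?_ ?_ ?_ ?_ ?_
    · rintro ⟨k, l⟩ hx
      obtain ⟨h, ⟨c, hc⟩, d, hd⟩ := mem_pairsLeft_inter_pairsRight.mp hx
      dsimp only at h hc hd
      rw [mem_pairs_iff_int]
      dsimp only
      rw [hc, hd, Int.mul_ediv_cancel_left _ (by norm_num),
        Int.mul_ediv_cancel_left _ (by norm_num)]
      obtain rfl : k = 1 - 5 * c := by linarith
      obtain rfl : l = 1 - 5 * d := by linarith
      push_cast at h
      linarith
    · rintro ⟨k, l⟩ hx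
      rw [mem_pairs_iff_int] at hx
      rw [mem_pairsLeft_inter_pairsRight]
      dsimp only at hx ⊢
      push_cast
      exact ⟨by linear_combination 25 * hx, by omega, by omega⟩
    · intro x hx
      obtain ⟨-, h1, h2⟩ := mem_pairsLeft_inter_pairsRight.mp hx
      ext <;> dsimp only <;> omega
    · intro x _
      ext <;> dsimp only <;> omega
    · intro x hx
      obtain ⟨-, h1, h2⟩ := mem_pairsLeft_inter_pairsRight.mp hx
      dsimp only
      have he : Even ((1 - x.1) / 5 + (1 - x.2) / 5 - (x.1 + x.2)) := by
        rw [Int.even_iff]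
        omega
      rw [show (1 - x.1) / 5 + (1 - x.2) / 5 =
        (x.1 + x.2) + ((1 - x.1) / 5 + (1 - x.2) / 5 - (x.1 + x.2)) by ring,
        zpow_add₀ (by norm_num) (x.1 + x.2), he.neg_one_zpow, mul_one]
  · refine Finset.sum_eq_zero fun x hx ↦ ?_
    obtain ⟨h, ⟨c, hc⟩, d, hd⟩ := mem_pairsLeft_inter_pairsRight.mp hx
    refine absurd ?_ hn
    rw [show x.1 = 1 - 5 * c by linarith, show x.2 = 1 - 5 * d by linarith] at h
    push_cast at h
    have h' : 5 * (5 * (c * (3 * c - 1) + d * (3 * d - 1))) = 5 * (2 * (n : ℤ)) := by linarith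
    omega

theorem pairSum_five_mul_add_two (n : ℕ) :
    pairSum (5 * n + 2) = -(if 5 ∣ n then pairSum (n / 5) else 0) := by
  have h := Finset.sum_union_inter (s₁ := pairsLeft (5 * n + 2)) (s₂ := pairsRight (5 * n + 2))
    (f := fun x ↦ (-1 : ℂ) ^ (x.1 + x.2))
  rw [pairsLeft_union_pairsRight, sum_pairsLeft_inter_pairsRight, sum_pairsLeft,
    sum_pairsRight] at h
  rw [pairSum]
  linear_combination h

theorem U52_euler_sq (a : ℕ → ℂ)
    (ha : ∀ q : ℂ, ‖q‖ < 1 → (qPochInf q q) ^ 2 = ∑' n : ℕ, a n * q ^ n) :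
    ∀ q : ℂ, ‖q‖ < 1 → ∑' n : ℕ, a (5 * n + 2) * q ^ n = -(Jb 5 q) ^ 2 := by
  intro q hq
  have hq5 : ‖q ^ 5‖ < 1 := by
    rw [norm_pow]
    exact pow_lt_one₀ (norm_nonneg q) hq (by norm_num)
  have hinj : Function.Injective fun m : ℕ ↦ 5 * m := fun m n h ↦ by
    dsimp only at h
    omega
  have h : HasSum (fun n : ℕ ↦ (if 5 ∣ n then pairSum (n / 5) else 0) * q ^ n)
      (qPochInf (q ^ 5) (q ^ 5) ^ 2) := by
    rw [← hinj.hasSum_iff]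
    · convert hasSum_pairSum hq5 using 2 with m
      simp [pow_mul]
    · intro n hn
      rw [if_neg (fun ⟨m, hm⟩ ↦ hn ⟨m, hm.symm⟩), zero_mul]
  simp_rw [coeff_eq_pairSum ha, pairSum_five_mul_add_two, neg_mul]
  exact h.neg.tsum_eq
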